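/- For every ε > 0 there exist ρ > 0 with ρ ≪ ε and n_0 = n_0(ε) such that the following holds for every integer n ≥ n_0 with n ≡ 0 (mod 4): let H be a balanced (1,4)-partite 5-graph with partition classes X, [n] (|X| = n/4) such that d_H({x,v}) ≥ binom(n-1,3) - binom(3n/4,3) - 3ρn^3 for every x ∈ X and v ∈ [n]. If H contains no independent set S with |S ∩ X| ≥ n/4 - εn and |S ∩ [n]| ≥ 3n/4 - εn, then H has a fractional perfect matching. -/

import Mathlib

/-!
By linear programming duality (a Hahn–Banach separation), a hypergraph without a fractional
perfect matching carries vertex weights that are nonnegative on every edge and have negative total.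
After shifting and scaling, these are `h ≥ -1` on the small class and `w ≥ 0` on the large class,
with `h x = -1` and `w v = 0` for some `x` and `v`. Every edge through `x` and `v` then yields six
ordered triples of `w`-weight at least `1`, so the codegree condition makes the density of such
triples at least `37/64 - o(1)`, where `37/64 = 1 - (3/4)^3`.

On the other hand `w` has mean less than `1/4`, and among independent nonnegative variables `X₁`,
`X₂`, `X₃` of mean at most `1/4` the probability of `X₁ + X₂ + X₃ ≥ 1` never exceeds `37/64`.
Replacing one variable after another by an extremal law, it suffices to consider laws with at most
two atoms. There the bound is stable: it is attained only if each variable is `1` with probability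
`1/4` and `0` otherwise. Since `{h < -1/2} ∪ {w ≤ 1/8}` is independent, one of these two sets is
small, so the mean of `w` is smaller than `1/4` by a constant or `w > 1/8` on more than a quarter of
its class, and the density stays below `37/64` by a constant.
-/

open scoped BigOperators

theorem one_add_sum_le_prod_one_add {ι : Type*} {s : Finset ι} {f : ι → ℝ}
    (hf : ∀ i ∈ s, 0 ≤ f i) : 1 + ∑ i ∈ s, f i ≤ ∏ i ∈ s, (1 + f i) := by
  classical
  induction s using Finset.induction_on with
  | empty => simp
  | insert a s ha ih =>
    have hfa : 0 ≤ f a := hf a (Finset.mem_insert_self a s)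
    have hs : ∀ i ∈ s, 0 ≤ f i := fun i hi => hf i (Finset.mem_insert_of_mem hi)
    rw [Finset.sum_insert ha, Finset.prod_insert ha]
    nlinarith [ih hs, mul_nonneg hfa (Finset.sum_nonneg hs)]

section Budget

variable {ι : Type*} {A : Finset ι} {p d : ι → ℝ} {S : ℝ}

-- The slack `r` in `∑ i ∈ A, p i * d i ≤ S` is at most `S / 2` and bounds each `p i * d i`.
theorem two_le_mul_one_add_sum_of_budget (hp₁ : ∀ i ∈ A, p i ≤ 1) (hd₀ : ∀ i ∈ A, 0 ≤ d i)
    (hd : 1 ≤ ∑ i ∈ A, d i) (hS₀ : 0 ≤ S) (hS₁ : S ≤ 1) (hp : ∀ i ∈ A, S / 2 < p i)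
    (hbudget : ∀ j ∈ A, p j * d j + ∑ i ∈ A, p i * d i ≤ S) :
    2 ≤ S * (1 + ∑ i ∈ A, ((p i)⁻¹ - 1)) := by
  have hp₀ : ∀ i ∈ A, 0 < p i := fun i hi => by linarith [hp i hi]
  obtain ⟨r, hr⟩ : ∃ r, r = S - ∑ i ∈ A, p i * d i := ⟨_, rfl⟩
  have hd_le : ∀ i ∈ A, d i ≤ r * (p i)⁻¹ := fun i hi => by
    rw [← div_eq_mul_inv, le_div_iff₀ (hp₀ i hi)]
    linarith [hbudget i hi]
  have hr_pos : 0 < r := by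
    by_contra! hr₀
    have : ∑ i ∈ A, d i ≤ 0 := Finset.sum_nonpos fun i hi =>
      (hd_le i hi).trans (mul_nonpos_of_nonpos_of_nonneg hr₀ (inv_nonneg.2 (hp₀ i hi).le))
    linarith
  have hr_le : r ≤ S / 2 := by
    have : S / 2 * ∑ i ∈ A, d i ≤ ∑ i ∈ A, p i * d i := by
      rw [Finset.mul_sum]
      exact Finset.sum_le_sum fun i hi => mul_le_mul_of_nonneg_right (hp i hi).le (hd₀ i hi)
    nlinarith
  have hgap : 1 - S + r ≤ r * ∑ i ∈ A, ((p i)⁻¹ - 1) := calc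
    1 - S + r ≤ ∑ i ∈ A, (1 - p i) * d i := by
      simp only [sub_mul, one_mul, Finset.sum_sub_distrib]
      linarith
    _ ≤ ∑ i ∈ A, (1 - p i) * (r * (p i)⁻¹) := Finset.sum_le_sum fun i hi =>
      mul_le_mul_of_nonneg_left (hd_le i hi) (sub_nonneg.2 (hp₁ i hi))
    _ = r * ∑ i ∈ A, ((p i)⁻¹ - 1) := by
      rw [Finset.mul_sum]
      exact Finset.sum_congr rfl fun i hi => by field_simp [(hp₀ i hi).ne']
  have hT : 1 ≤ ∑ i ∈ A, ((p i)⁻¹ - 1) := le_of_mul_le_mul_left (by linarith) hr_pos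
  nlinarith [hr_pos, hr_le, hgap, hT]

theorem prod_le_half_of_budget (hp₀ : ∀ i ∈ A, 0 ≤ p i) (hp₁ : ∀ i ∈ A, p i ≤ 1)
    (hd₀ : ∀ i ∈ A, 0 ≤ d i) (hd : 1 ≤ ∑ i ∈ A, d i) (hS : S ≤ 1)
    (hbudget : ∀ j ∈ A, p j * d j + ∑ i ∈ A, p i * d i ≤ S) : ∏ i ∈ A, p i ≤ S / 2 := by
  classical
  by_contra! hprod
  obtain ⟨k, hk⟩ : A.Nonempty := Finset.nonempty_of_sum_ne_zero (by linarith : ∑ i ∈ A, d i ≠ 0)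
  have hS₀ : 0 ≤ S := (add_nonneg (mul_nonneg (hp₀ k hk) (hd₀ k hk))
    (Finset.sum_nonneg fun i hi => mul_nonneg (hp₀ i hi) (hd₀ i hi))).trans (hbudget k hk)
  have hp : ∀ j ∈ A, S / 2 < p j := fun j hj => hprod.trans_le (by
    rw [← Finset.mul_prod_erase A p hj]
    exact mul_le_of_le_one_right (hp₀ j hj) (Finset.prod_le_one
      (fun i hi => hp₀ i (Finset.mem_of_mem_erase hi))
      fun i hi => hp₁ i (Finset.mem_of_mem_erase hi)))
  have hp_pos : ∀ j ∈ A, 0 < p j := fun j hj => by linarith [hp j hj]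
  have hbernoulli : 1 + ∑ i ∈ A, ((p i)⁻¹ - 1) ≤ (∏ i ∈ A, p i)⁻¹ := by
    rw [← Finset.prod_inv_distrib]
    refine (one_add_sum_le_prod_one_add fun i hi =>
      sub_nonneg.2 ((one_le_inv₀ (hp_pos i hi)).2 (hp₁ i hi))).trans_eq ?_
    simp only [add_sub_cancel]
  have hprod_pos : 0 < ∏ i ∈ A, p i := Finset.prod_pos hp_pos
  have htwo : 2 ≤ S * (∏ i ∈ A, p i)⁻¹ :=
    (two_le_mul_one_add_sum_of_budget hp₁ hd₀ hd hS₀ hS hp hbudget).trans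
      (mul_le_mul_of_nonneg_left hbernoulli hS₀)
  rw [← div_eq_mul_inv, le_div_iff₀ hprod_pos] at htwo
  linarith

end Budget

theorem prod_one_sub_ge {t₀ t₁ t₂ : ℝ} (h₀ : 0 ≤ t₀) (h₁ : 0 ≤ t₁) (h₂ : 0 ≤ t₂)
    (hs₀ : t₀ + (t₀ + t₁ + t₂) ≤ 1) (hs₁ : t₁ + (t₀ + t₁ + t₂) ≤ 1)
    (hs₂ : t₂ + (t₀ + t₁ + t₂) ≤ 1) :
    27 / 64 + (3 / 4 - (t₀ + t₁ + t₂)) / 400 ≤ (1 - t₀) * (1 - t₁) * (1 - t₂) := by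
  obtain ⟨s, hs⟩ : ∃ s, s = t₀ + t₁ + t₂ := ⟨_, rfl⟩
  rw [← hs] at hs₀ hs₁ hs₂ ⊢
  have hlinear : 1 - s ≤ (1 - t₀) * (1 - t₁) * (1 - t₂) := by
    have h := mul_nonneg h₀ h₁
    nlinarith [mul_nonneg h₀ h₂, mul_nonneg h₁ h₂, mul_nonneg h (by linarith : 0 ≤ 1 - t₂)]
  have hcubic : 3 * s ^ 2 * (1 - s) ≤ (1 - t₀) * (1 - t₁) * (1 - t₂) := by
    have hv₀ : 0 ≤ 1 - s - t₀ := by linarith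
    have hv₁ : 0 ≤ 1 - s - t₁ := by linarith
    have hv₂ : 0 ≤ 1 - s - t₂ := by linarith
    have hs_nonneg : 0 ≤ s := by linarith
    have hpairs : 0 ≤ s * ((1 - s - t₀) * (1 - s - t₁) + (1 - s - t₀) * (1 - s - t₂)
      + (1 - s - t₁) * (1 - s - t₂)) := by positivity
    have htriple : 0 ≤ (1 - s - t₀) * (1 - s - t₁) * (1 - s - t₂) := by positivity
    have ht₂ : t₂ = s - t₀ - t₁ := by linarith
    subst ht₂
    linarith
  -- The linear bound suffices for small `s`; the cubic one is tight at `s = 3 / 4`.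
  rcases le_total s (577 / 1000) with hsmall | hlarge
  · linarith
  · have hfactor : 0 ≤ (3 / 4 - s) * (3 * s ^ 2 - 3 / 4 * s - 9 / 16 - 1 / 400) :=
      mul_nonneg (by linarith) (by nlinarith)
    linarith

theorem add_sub_mul_le {p q : ℝ} (hp₀ : 0 ≤ p) (hq₀ : 0 ≤ q) (hp : 2 * p + q ≤ 1)
    (hq : p + 2 * q ≤ 1) : p + q - p * q ≤ 5 / 9 := by
  wlog hpq : q ≤ p generalizing p q
  · linarith [this hq₀ hp₀ (by linarith) (by linarith) (le_of_not_ge hpq)]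
  rcases le_total p (1 / 3) with hsmall | hlarge
  · nlinarith
  · nlinarith [mul_nonneg (sub_nonneg.2 hp) (by linarith : 0 ≤ 1 - p)]

theorem majority_poly_le {p a b : ℝ} (hp₀ : 0 ≤ p) (hp₁ : p ≤ 1) (ha : 0 ≤ a) (hb : 0 ≤ b)
    (h₁ : p + 2 * a + b ≤ 2) (h₂ : p + a + 2 * b ≤ 2) :
    p * (a + b - 2 * (a * b)) + a * b ≤ 5 / 9 := by
  wlog hba : b ≤ a generalizing a b
  · linarith [this hb ha (by linarith) (by linarith) (le_of_not_ge hba)]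
  have hdiag : 3 * p ^ 2 - 2 * p ^ 3 ≤ 1 := by
    nlinarith [mul_nonneg (sq_nonneg (1 - p)) (by linarith : 0 ≤ 1 + 2 * p)]
  rcases le_total p (1 / 2) with hp | hp
  · have hsum : 3 * (a + b) ≤ 2 * (2 - p) := by linarith
    have hsq : (3 * (a + b)) ^ 2 ≤ (2 * (2 - p)) ^ 2 := pow_le_pow_left₀ (by positivity) hsum 2
    have hprod : 9 * (a * b) ≤ (2 - p) ^ 2 := by nlinarith [sq_nonneg (a - b)]
    nlinarith [mul_le_mul_of_nonneg_left hprod (by linarith : 0 ≤ 1 - 2 * p),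
      mul_le_mul_of_nonneg_left hsum hp₀]
  · have ha_edge := mul_nonneg (by nlinarith : 0 ≤ p - (2 * p - 1) * b)
      (by linarith : 0 ≤ 2 - p - 2 * a - b)
    have hchord := mul_nonneg (mul_nonneg (by linarith : 0 ≤ 2 * p - 1) hb)
      (by linarith : 0 ≤ 2 - p - 3 * b)
    nlinarith

/-- The law of a random variable taking the value `hi` with probability `prob` and the value `lo`
otherwise. -/
structure TwoPointLaw where
  lo : ℝ
  hi : ℝ
  prob : ℝ
  lo_nonneg : 0 ≤ lo
  lo_le_hi : lo ≤ hi
  prob_nonneg : 0 ≤ prob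
  prob_le_one : prob ≤ 1

namespace TwoPointLaw

/-- The expectation of `f` under a two-point law. -/
def expect (Y : TwoPointLaw) (f : ℝ → ℝ) : ℝ :=
  (1 - Y.prob) * f Y.lo + Y.prob * f Y.hi

/-- The expectation of a two-point law. -/
def mean (Y : TwoPointLaw) : ℝ :=
  Y.expect id

/-- The expectation of `F` under three independent two-point laws. -/
def expect₃ (Y : Fin 3 → TwoPointLaw) (F : ℝ → ℝ → ℝ → ℝ) : ℝ :=
  (Y 0).expect fun x => (Y 1).expect fun y => (Y 2).expect fun z => F x y z

/-- The probability that three independent variables with the given laws have sum at least `1`. -/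
noncomputable def tailProb (Y : Fin 3 → TwoPointLaw) : ℝ :=
  expect₃ Y fun x y z => if 1 ≤ x + y + z then 1 else 0

theorem expect₃_add_comp_perm (Y : Fin 3 → TwoPointLaw) (G : ℝ → ℝ) (σ : Equiv.Perm (Fin 3)) :
    expect₃ (Y ∘ σ) (fun x y z => G (x + y + z)) = expect₃ Y fun x y z => G (x + y + z) := by
  have h₀₁ : σ 0 ≠ σ 1 := σ.injective.ne (by decide)
  have h₀₂ : σ 0 ≠ σ 2 := σ.injective.ne (by decide)
  have h₁₂ : σ 1 ≠ σ 2 := σ.injective.ne (by decide)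
  simp only [expect₃, expect, Function.comp_apply]
  generalize σ 0 = a, σ 1 = b, σ 2 = c at *
  fin_cases a <;> fin_cases b <;> fin_cases c <;>
    first
    | exact absurd rfl ‹_›
    | rfl
    | (simp only [Fin.zero_eta, Fin.mk_one, Fin.reduceFinMk]; ring_nf)

/-- Three laws with lower value `0` and a bound on the means: what remains of three laws of mean
at most `1 / 4` after the lower values are subtracted and the threshold is rescaled to `1`. -/
structure IsNormalized (Z : Fin 3 → TwoPointLaw) : Prop where
  lo_eq_zero : ∀ i, (Z i).lo = 0
  mean_add_sum_mean_le : ∀ i, (Z i).mean + ∑ j, (Z j).mean ≤ 1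

namespace IsNormalized

variable {Z : Fin 3 → TwoPointLaw}

theorem hi_nonneg (hZ : IsNormalized Z) (i : Fin 3) : 0 ≤ (Z i).hi :=
  (hZ.lo_eq_zero i).symm.trans_le (Z i).lo_le_hi

theorem mean_eq (hZ : IsNormalized Z) (i : Fin 3) : (Z i).mean = (Z i).prob * (Z i).hi := by
  simp [mean, expect, hZ.lo_eq_zero i]

theorem mean_nonneg (hZ : IsNormalized Z) (i : Fin 3) : 0 ≤ (Z i).mean := by
  rw [hZ.mean_eq]
  exact mul_nonneg (Z i).prob_nonneg (hZ.hi_nonneg i)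

theorem prob_le_mean (hZ : IsNormalized Z) {i : Fin 3} (hi : 1 ≤ (Z i).hi) :
    (Z i).prob ≤ (Z i).mean := by
  rw [hZ.mean_eq]
  exact le_mul_of_one_le_right (Z i).prob_nonneg hi

theorem sum_mean_le (hZ : IsNormalized Z) : ∑ i, (Z i).mean ≤ 3 / 4 := by
  have h := hZ.mean_add_sum_mean_le
  simp only [Fin.sum_univ_three] at h ⊢
  linarith [h 0, h 1, h 2]

theorem comp_perm (hZ : IsNormalized Z) (σ : Equiv.Perm (Fin 3)) : IsNormalized (Z ∘ σ) where
  lo_eq_zero i := hZ.lo_eq_zero (σ i)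
  mean_add_sum_mean_le i := by
    simp only [Function.comp_apply]
    rw [Equiv.sum_comp σ fun j => (Z j).mean]
    exact hZ.mean_add_sum_mean_le (σ i)

theorem prod_prob_le (hZ : IsNormalized Z) {A : Finset (Fin 3)} {S : ℝ} (hS : S ≤ 1)
    (hA : 1 ≤ ∑ i ∈ A, (Z i).hi)
    (hbudget : ∀ j ∈ A, (Z j).mean + ∑ i ∈ A, (Z i).mean ≤ S) :
    ∏ i ∈ A, (Z i).prob ≤ S / 2 := by
  simp only [hZ.mean_eq] at hbudget
  exact prod_le_half_of_budget (fun i _ => (Z i).prob_nonneg) (fun i _ => (Z i).prob_le_one)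
    (fun i _ => hZ.hi_nonneg i) hA hS hbudget

theorem prod_prob_le_half (hZ : IsNormalized Z) {A : Finset (Fin 3)}
    (hA : 1 ≤ ∑ i ∈ A, (Z i).hi) : ∏ i ∈ A, (Z i).prob ≤ 1 / 2 :=
  hZ.prod_prob_le le_rfl hA fun j _ => (add_le_add_right (Finset.sum_le_univ_sum_of_nonneg
    hZ.mean_nonneg) _).trans (hZ.mean_add_sum_mean_le j)

theorem tailProb_eq (hZ : IsNormalized Z) :
    tailProb Z =
      (1 - (Z 0).prob) *
          ((1 - (Z 1).prob) * ((Z 2).prob * if 1 ≤ (Z 2).hi then 1 else 0)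
            + (Z 1).prob * ((1 - (Z 2).prob) * (if 1 ≤ (Z 1).hi then 1 else 0)
              + (Z 2).prob * if 1 ≤ (Z 1).hi + (Z 2).hi then 1 else 0))
        + (Z 0).prob *
          ((1 - (Z 1).prob) * ((1 - (Z 2).prob) * (if 1 ≤ (Z 0).hi then 1 else 0)
              + (Z 2).prob * if 1 ≤ (Z 0).hi + (Z 2).hi then 1 else 0)
            + (Z 1).prob * ((1 - (Z 2).prob) * (if 1 ≤ (Z 0).hi + (Z 1).hi then 1 else 0)
              + (Z 2).prob * if 1 ≤ (Z 0).hi + (Z 1).hi + (Z 2).hi then 1 else 0)) := by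
  simp only [tailProb, expect₃, expect, hZ.lo_eq_zero, zero_add, add_zero,
    if_neg (not_le.2 one_pos : ¬ (1 : ℝ) ≤ 0), mul_zero]

theorem tailProb_le_of_forall_one_le_hi (hZ : IsNormalized Z) (hhi : ∀ i, 1 ≤ (Z i).hi) :
    tailProb Z ≤ 37 / 64 - (3 / 4 - ∑ i, (Z i).mean) / 400 := by
  have hpair : ∀ i j, 1 ≤ (Z i).hi + (Z j).hi := fun i j => by linarith [hhi i, hhi j]
  have htriple : 1 ≤ (Z 0).hi + (Z 1).hi + (Z 2).hi := by linarith [hhi 0, hhi 1, hhi 2]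
  have hprod : tailProb Z = 1 - (1 - (Z 0).prob) * (1 - (Z 1).prob) * (1 - (Z 2).prob) := by
    rw [hZ.tailProb_eq, if_pos (hhi 2), if_pos (hhi 1), if_pos (hpair 1 2), if_pos (hhi 0),
      if_pos (hpair 0 2), if_pos (hpair 0 1), if_pos htriple]
    ring
  have hmean : (1 - (Z 0).mean) * (1 - (Z 1).mean) * (1 - (Z 2).mean)
      ≤ (1 - (Z 0).prob) * (1 - (Z 1).prob) * (1 - (Z 2).prob) := by
    have hprob : ∀ i, 0 ≤ 1 - (Z i).prob := fun i => sub_nonneg.2 (Z i).prob_le_one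
    have hle : ∀ i, 1 - (Z i).mean ≤ 1 - (Z i).prob := fun i =>
      sub_le_sub_left (hZ.prob_le_mean (hhi i)) 1
    have hmean_le : ∀ i, 0 ≤ 1 - (Z i).mean := fun i => by
      linarith [hZ.mean_add_sum_mean_le i, Finset.sum_nonneg fun j (_ : j ∈ Finset.univ) =>
        hZ.mean_nonneg j]
    exact mul_le_mul (mul_le_mul (hle 0) (hle 1) (hmean_le 1) (hprob 0)) (hle 2) (hmean_le 2)
      (mul_nonneg (hprob 0) (hprob 1))
  have hbudget := hZ.mean_add_sum_mean_le
  simp only [Fin.sum_univ_three] at hbudget ⊢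
  linarith [prod_one_sub_ge (hZ.mean_nonneg 0) (hZ.mean_nonneg 1) (hZ.mean_nonneg 2)
    (hbudget 0) (hbudget 1) (hbudget 2)]

theorem tailProb_le_of_two_large (hZ : IsNormalized Z) (h₀ : 1 ≤ (Z 0).hi) (h₁ : 1 ≤ (Z 1).hi)
    (h₂ : (Z 2).hi < 1) : tailProb Z ≤ 5 / 9 := by
  have htail : tailProb Z = (Z 0).prob + (Z 1).prob - (Z 0).prob * (Z 1).prob := by
    have h₀₁ : 1 ≤ (Z 0).hi + (Z 1).hi := by linarith
    have h₀₂ : 1 ≤ (Z 0).hi + (Z 2).hi := by linarith [hZ.hi_nonneg 2]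
    have h₁₂ : 1 ≤ (Z 1).hi + (Z 2).hi := by linarith [hZ.hi_nonneg 2]
    have h₀₁₂ : 1 ≤ (Z 0).hi + (Z 1).hi + (Z 2).hi := by linarith [hZ.hi_nonneg 2]
    rw [hZ.tailProb_eq, if_neg h₂.not_ge, if_pos h₁, if_pos h₁₂, if_pos h₀, if_pos h₀₂, if_pos h₀₁,
      if_pos h₀₁₂]
    ring
  have hbudget := hZ.mean_add_sum_mean_le
  simp only [Fin.sum_univ_three] at hbudget
  rw [htail]
  refine add_sub_mul_le (Z 0).prob_nonneg (Z 1).prob_nonneg ?_ ?_ <;>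
    linarith [hZ.prob_le_mean h₀, hZ.prob_le_mean h₁, hZ.mean_nonneg 2, hbudget 0, hbudget 1]

theorem tailProb_le_of_one_large (hZ : IsNormalized Z) (h₀ : 1 ≤ (Z 0).hi) (h₁ : (Z 1).hi < 1)
    (h₂ : (Z 2).hi < 1) : tailProb Z ≤ 5 / 9 := by
  have h₀₁ : 1 ≤ (Z 0).hi + (Z 1).hi := by linarith [hZ.hi_nonneg 1]
  have h₀₂ : 1 ≤ (Z 0).hi + (Z 2).hi := by linarith [hZ.hi_nonneg 2]
  have h₀₁₂ : 1 ≤ (Z 0).hi + (Z 1).hi + (Z 2).hi := by linarith [hZ.hi_nonneg 2]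
  have hbudget := hZ.mean_add_sum_mean_le
  simp only [Fin.sum_univ_three] at hbudget
  have hp₀ := hZ.prob_le_mean h₀
  by_cases h₁₂ : 1 ≤ (Z 1).hi + (Z 2).hi
  · have htail : tailProb Z = (Z 0).prob + (Z 1).prob * (Z 2).prob
        - (Z 0).prob * ((Z 1).prob * (Z 2).prob) := by
      rw [hZ.tailProb_eq, if_neg h₂.not_ge, if_neg h₁.not_ge, if_pos h₁₂, if_pos h₀, if_pos h₀₂,
        if_pos h₀₁, if_pos h₀₁₂]
      ring
    have hhalf := hZ.prod_prob_le (A := {1, 2}) (S := 1 - (Z 0).prob)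
      (by linarith [(Z 0).prob_nonneg]) (by simpa using h₁₂) (by
        simp only [Finset.mem_insert, Finset.mem_singleton, forall_eq_or_imp, forall_eq,
          Finset.sum_pair (by decide : (1 : Fin 3) ≠ 2)]
        constructor <;> linarith [hbudget 1, hbudget 2])
    rw [Finset.prod_pair (by decide)] at hhalf
    have hprod : (Z 1).prob * (Z 2).prob ≤ (Z 1).mean + (Z 2).mean := by
      have hq₁ := mul_le_of_le_one_right (Z 1).prob_nonneg (Z 2).prob_le_one
      have hq₂ := mul_le_of_le_one_left (Z 2).prob_nonneg (Z 1).prob_le_one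
      have hq := mul_nonneg (Z 1).prob_nonneg (Z 2).prob_nonneg
      rw [hZ.mean_eq, hZ.mean_eq]
      nlinarith [mul_le_mul_of_nonneg_right hq₁ (hZ.hi_nonneg 1),
        mul_le_mul_of_nonneg_right hq₂ (hZ.hi_nonneg 2)]
    rw [htail]
    exact add_sub_mul_le (Z 0).prob_nonneg (mul_nonneg (Z 1).prob_nonneg (Z 2).prob_nonneg)
      (by linarith [hbudget 0]) (by linarith)
  · have htail : tailProb Z = (Z 0).prob := by
      rw [hZ.tailProb_eq, if_neg h₂.not_ge, if_neg h₁.not_ge, if_neg h₁₂, if_pos h₀, if_pos h₀₂,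
        if_pos h₀₁, if_pos h₀₁₂]
      ring
    linarith [hbudget 0, hZ.mean_nonneg 1, hZ.mean_nonneg 2]

theorem tailProb_le_of_majority (hZ : IsNormalized Z) (hhi : ∀ i, (Z i).hi < 1)
    (h₀₁ : (Z 1).hi ≤ (Z 0).hi) (h₁₂ : (Z 2).hi ≤ (Z 1).hi) (hpair : 1 ≤ (Z 1).hi + (Z 2).hi) :
    tailProb Z ≤ 5 / 9 := by
  have htail : tailProb Z = (Z 2).prob * ((Z 0).prob + (Z 1).prob
      - 2 * ((Z 0).prob * (Z 1).prob)) + (Z 0).prob * (Z 1).prob := by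
    have h₀₁' : 1 ≤ (Z 0).hi + (Z 1).hi := by linarith
    have h₀₂' : 1 ≤ (Z 0).hi + (Z 2).hi := by linarith
    have h₀₁₂ : 1 ≤ (Z 0).hi + (Z 1).hi + (Z 2).hi := by linarith [hZ.hi_nonneg 2]
    rw [hZ.tailProb_eq, if_neg (hhi 2).not_ge, if_neg (hhi 1).not_ge, if_pos hpair,
      if_neg (hhi 0).not_ge, if_pos h₀₂', if_pos h₀₁', if_pos h₀₁₂]
    ring
  obtain ⟨x, hx, hx₂, hx₁⟩ : ∃ x ≤ (1 / 2 : ℝ), x ≤ (Z 2).hi ∧ 1 - x ≤ (Z 1).hi := by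
    refine ⟨min (Z 2).hi (1 / 2), min_le_right _ _, min_le_left _ _, ?_⟩
    rcases min_cases (Z 2).hi (1 / 2 : ℝ) with h | h <;> linarith
  have hmean₀ : (Z 0).prob * (1 - x) ≤ (Z 0).mean := by
    rw [hZ.mean_eq]
    exact mul_le_mul_of_nonneg_left (hx₁.trans h₀₁) (Z 0).prob_nonneg
  have hmean₁ : (Z 1).prob * (1 - x) ≤ (Z 1).mean := by
    rw [hZ.mean_eq]
    exact mul_le_mul_of_nonneg_left hx₁ (Z 1).prob_nonneg
  have hmean₂ : (Z 2).prob * x ≤ (Z 2).mean := by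
    rw [hZ.mean_eq]
    exact mul_le_mul_of_nonneg_left hx₂ (Z 2).prob_nonneg
  have hbalance : ∀ u : ℝ, u * (1 - x) + (Z 2).prob * x ≤ 1 → (Z 2).prob + u ≤ 2 := fun u hu => by
    nlinarith [(Z 2).prob_le_one]
  have hbudget := hZ.mean_add_sum_mean_le
  simp only [Fin.sum_univ_three] at hbudget
  rw [htail]
  refine majority_poly_le (Z 2).prob_nonneg (Z 2).prob_le_one (Z 0).prob_nonneg
    (Z 1).prob_nonneg ?_ ?_
  · linarith [hbalance (2 * (Z 0).prob + (Z 1).prob) (by linarith [hbudget 0])]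
  · linarith [hbalance ((Z 0).prob + 2 * (Z 1).prob) (by linarith [hbudget 1])]

theorem tailProb_le_half_of_cherry (hZ : IsNormalized Z) (hhi : ∀ i, (Z i).hi < 1)
    (h₁₂ : (Z 2).hi ≤ (Z 1).hi) (h₀₂ : 1 ≤ (Z 0).hi + (Z 2).hi) (hpair : (Z 1).hi + (Z 2).hi < 1) :
    tailProb Z ≤ 1 / 2 := by
  have htail : tailProb Z = (Z 0).prob * ((Z 1).prob + (Z 2).prob - (Z 1).prob * (Z 2).prob) := by
    have h₀₁ : 1 ≤ (Z 0).hi + (Z 1).hi := by linarith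
    have h₀₁₂ : 1 ≤ (Z 0).hi + (Z 1).hi + (Z 2).hi := by linarith [hZ.hi_nonneg 2]
    rw [hZ.tailProb_eq, if_neg (hhi 2).not_ge, if_neg (hhi 1).not_ge, if_neg hpair.not_ge,
      if_neg (hhi 0).not_ge, if_pos h₀₂, if_pos h₀₁, if_pos h₀₁₂]
    ring
  have hunion : (Z 1).prob + (Z 2).prob - (Z 1).prob * (Z 2).prob ≤ 1 := by
    nlinarith [mul_nonneg (sub_nonneg.2 (Z 1).prob_le_one) (sub_nonneg.2 (Z 2).prob_le_one)]
  rw [htail]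
  rcases le_total (Z 0).prob (1 / 2) with hsmall | hlarge
  · exact (mul_le_of_le_one_right (Z 0).prob_nonneg hunion).trans hsmall
  have hsum : 2 * (Z 0).prob + (Z 1).prob + (Z 2).prob ≤ 2 := by
    have hbudget := hZ.mean_add_sum_mean_le 0
    have hlow₁ := mul_le_mul_of_nonneg_left (by linarith : 1 - (Z 0).hi ≤ (Z 1).hi)
      (Z 1).prob_nonneg
    have hlow₂ := mul_le_mul_of_nonneg_left (by linarith : 1 - (Z 0).hi ≤ (Z 2).hi)
      (Z 2).prob_nonneg
    simp only [Fin.sum_univ_three, hZ.mean_eq] at hbudget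
    have hlt : 0 < 1 - (Z 0).hi := sub_pos.2 (hhi 0)
    by_contra! hcon
    nlinarith
  have hq := mul_nonneg (Z 1).prob_nonneg (Z 2).prob_nonneg
  nlinarith [sq_nonneg (2 * (Z 0).prob - 1), (Z 0).prob_nonneg]

theorem tailProb_le_half_of_one_pair (hZ : IsNormalized Z) (hhi : ∀ i, (Z i).hi < 1)
    (h₀₂ : (Z 0).hi + (Z 2).hi < 1) (h₁₂ : (Z 1).hi + (Z 2).hi < 1) : tailProb Z ≤ 1 / 2 := by
  rw [hZ.tailProb_eq, if_neg (hhi 2).not_ge, if_neg (hhi 1).not_ge, if_neg h₁₂.not_ge,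
    if_neg (hhi 0).not_ge, if_neg h₀₂.not_ge]
  by_cases h₀₁ : 1 ≤ (Z 0).hi + (Z 1).hi
  · have hprod := hZ.prod_prob_le_half (A := {0, 1}) (by simpa using h₀₁)
    rw [Finset.prod_pair (by decide)] at hprod
    rw [if_pos h₀₁, if_pos (by linarith [hZ.hi_nonneg 2])]
    linarith
  by_cases h₀₁₂ : 1 ≤ (Z 0).hi + (Z 1).hi + (Z 2).hi
  · have hprod := hZ.prod_prob_le_half (A := Finset.univ) (by rwa [Fin.sum_univ_three])
    rw [Fin.prod_univ_three] at hprod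
    rw [if_neg h₀₁, if_pos h₀₁₂]
    linarith
  · rw [if_neg h₀₁, if_neg h₀₁₂]
    norm_num

theorem tailProb_le_of_antitone (hZ : IsNormalized Z) (hanti : Antitone fun i => (Z i).hi)
    (h₂ : (Z 2).hi < 1) : tailProb Z ≤ 5 / 9 := by
  have h₀₁ : (Z 1).hi ≤ (Z 0).hi := hanti (by decide)
  have h₁₂ : (Z 2).hi ≤ (Z 1).hi := hanti (by decide)
  rcases le_or_gt 1 (Z 1).hi with h₁ | h₁
  · exact hZ.tailProb_le_of_two_large (h₁.trans h₀₁) h₁ h₂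
  rcases le_or_gt 1 (Z 0).hi with h₀ | h₀
  · exact hZ.tailProb_le_of_one_large h₀ h₁ h₂
  have hhi : ∀ i, (Z i).hi < 1 := fun i => (hanti (Fin.zero_le i)).trans_lt h₀
  rcases le_or_gt 1 ((Z 1).hi + (Z 2).hi) with hpair | hpair
  · exact hZ.tailProb_le_of_majority hhi h₀₁ h₁₂ hpair
  refine le_trans ?_ (by norm_num : (1 / 2 : ℝ) ≤ 5 / 9)
  rcases le_or_gt 1 ((Z 0).hi + (Z 2).hi) with h₀₂ | h₀₂
  · exact hZ.tailProb_le_half_of_cherry hhi h₁₂ h₀₂ hpair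
  · exact hZ.tailProb_le_half_of_one_pair hhi h₀₂ hpair

theorem tailProb_le_of_exists_hi_lt_one (hZ : IsNormalized Z) (hlt : ∃ i, (Z i).hi < 1) :
    tailProb Z ≤ 5 / 9 := by
  obtain ⟨σ, hσ⟩ : ∃ σ : Equiv.Perm (Fin 3), Antitone fun i => (Z (σ i)).hi :=
    ⟨_, fun i j hij => neg_le_neg_iff.1 (Tuple.monotone_sort (fun i => -(Z i).hi) hij)⟩
  have htail : tailProb (Z ∘ σ) = tailProb Z :=
    expect₃_add_comp_perm Z (fun r => if 1 ≤ r then 1 else 0) σ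
  obtain ⟨i, hi⟩ := hlt
  rw [← htail]
  refine (hZ.comp_perm σ).tailProb_le_of_antitone hσ (lt_of_le_of_lt ?_ hi)
  simpa using hσ (Fin.le_last (σ.symm i))

theorem tailProb_le (hZ : IsNormalized Z) :
    tailProb Z ≤ 37 / 64 - (3 / 4 - ∑ i, (Z i).mean) / 400 := by
  by_cases hhi : ∀ i, 1 ≤ (Z i).hi
  · exact hZ.tailProb_le_of_forall_one_le_hi hhi
  · push Not at hhi
    linarith [hZ.tailProb_le_of_exists_hi_lt_one hhi,
      Finset.sum_nonneg fun i (_ : i ∈ Finset.univ) => hZ.mean_nonneg i]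

theorem tailProb_le_or_sum_prob_le (hZ : IsNormalized Z) :
    tailProb Z ≤ 5 / 9 ∨ ∑ i, (Z i).prob ≤ 3 / 4 := by
  by_cases hhi : ∀ i, 1 ≤ (Z i).hi
  · exact .inr ((Finset.sum_le_sum fun i _ => hZ.prob_le_mean (hhi i)).trans hZ.sum_mean_le)
  · push Not at hhi
    exact .inl (hZ.tailProb_le_of_exists_hi_lt_one hhi)

end IsNormalized

theorem lo_le_mean (Y : TwoPointLaw) : Y.lo ≤ Y.mean := by
  simp only [mean, expect, id]
  linarith [mul_nonneg Y.prob_nonneg (sub_nonneg.2 Y.lo_le_hi)]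

/-- The law of `(X - lo) / c` when `X` has the law `Y`. -/
noncomputable def rescale (Y : TwoPointLaw) {c : ℝ} (hc : 0 < c) : TwoPointLaw where
  lo := 0
  hi := (Y.hi - Y.lo) / c
  prob := Y.prob
  lo_nonneg := le_rfl
  lo_le_hi := div_nonneg (sub_nonneg.2 Y.lo_le_hi) hc.le
  prob_nonneg := Y.prob_nonneg
  prob_le_one := Y.prob_le_one

theorem expect_rescale (Y : TwoPointLaw) {c : ℝ} (hc : 0 < c) (f : ℝ → ℝ) :
    (Y.rescale hc).expect f = Y.expect fun x => f ((x - Y.lo) / c) := by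
  simp only [expect, rescale, sub_self, zero_div]

theorem mean_rescale (Y : TwoPointLaw) {c : ℝ} (hc : 0 < c) :
    (Y.rescale hc).mean = (Y.mean - Y.lo) / c := by
  rw [mean, expect_rescale]
  simp only [mean, expect, id]
  ring

variable {Y : Fin 3 → TwoPointLaw}

theorem sum_mean_le (hY : ∀ i, (Y i).mean ≤ 1 / 4) : ∑ i, (Y i).mean ≤ 3 / 4 := by
  rw [Fin.sum_univ_three]
  linarith [hY 0, hY 1, hY 2]

theorem one_sub_sum_lo_pos (hY : ∀ i, (Y i).mean ≤ 1 / 4) : 0 < 1 - ∑ i, (Y i).lo := by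
  linarith [sum_mean_le hY, Finset.sum_le_sum fun i (_ : i ∈ Finset.univ) => (Y i).lo_le_mean]

/-- The excesses over the lower values, measured in units of what is missing from `∑ i, lo i` to
the threshold `1`. -/
noncomputable def normalize (Y : Fin 3 → TwoPointLaw) (hY : ∀ i, (Y i).mean ≤ 1 / 4) :
    Fin 3 → TwoPointLaw :=
  fun i => (Y i).rescale (one_sub_sum_lo_pos hY)

theorem isNormalized_normalize (hY : ∀ i, (Y i).mean ≤ 1 / 4) : IsNormalized (normalize Y hY) where
  lo_eq_zero _ := rfl
  mean_add_sum_mean_le i := by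
    simp only [normalize, mean_rescale]
    rw [← Finset.sum_div, ← add_div, div_le_one (one_sub_sum_lo_pos hY), Finset.sum_sub_distrib]
    linarith [sum_mean_le hY, hY i, (Y i).lo_nonneg]

theorem tailProb_normalize (hY : ∀ i, (Y i).mean ≤ 1 / 4) :
    tailProb (normalize Y hY) = tailProb Y := by
  simp only [tailProb, expect₃, normalize, expect_rescale]
  congr! 7 with x y z
  rw [← add_div, ← add_div, one_le_div (one_sub_sum_lo_pos hY), Fin.sum_univ_three]
  constructor <;> intro h <;> linarith

theorem sum_mean_normalize_le (hY : ∀ i, (Y i).mean ≤ 1 / 4) :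
    ∑ i, (normalize Y hY i).mean ≤ ∑ i, (Y i).mean - (∑ i, (Y i).lo) / 4 := by
  have hlo : 0 ≤ ∑ i, (Y i).lo := Finset.sum_nonneg fun i _ => (Y i).lo_nonneg
  simp only [normalize, mean_rescale]
  rw [← Finset.sum_div, div_le_iff₀ (one_sub_sum_lo_pos hY), Finset.sum_sub_distrib]
  nlinarith [mul_nonneg hlo (sub_nonneg.2 (sum_mean_le hY))]

theorem tailProb_le (hY : ∀ i, (Y i).mean ≤ 1 / 4) :
    tailProb Y ≤ 37 / 64 - (3 / 4 - ∑ i, (Y i).mean) / 400 - (∑ i, (Y i).lo) / 1600 := by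
  rw [← tailProb_normalize hY]
  linarith [(isNormalized_normalize hY).tailProb_le, sum_mean_normalize_le hY]

theorem tailProb_le_or_sum_prob_le (hY : ∀ i, (Y i).mean ≤ 1 / 4) :
    tailProb Y ≤ 5 / 9 ∨ ∑ i, (Y i).prob ≤ 3 / 4 := by
  rw [← tailProb_normalize hY]
  exact (isNormalized_normalize hY).tailProb_le_or_sum_prob_le

theorem expect_ge_eighth_le (Y : TwoPointLaw) :
    (Y.expect fun x => if 1 / 8 ≤ x then 1 else 0) ≤ Y.prob + 8 * Y.lo := by
  have hlo : (if 1 / 8 ≤ Y.lo then 1 else 0 : ℝ) ≤ 8 * Y.lo := by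
    split_ifs <;> linarith [Y.lo_nonneg]
  have hhi : (if 1 / 8 ≤ Y.hi then 1 else 0 : ℝ) ≤ 1 := by
    split_ifs <;> norm_num
  simp only [expect]
  nlinarith [Y.prob_nonneg, Y.prob_le_one, Y.lo_nonneg]

theorem tailProb_add_sum_expect_le (hY : ∀ i, (Y i).mean ≤ 1 / 4) :
    tailProb Y + (∑ i, (Y i).expect fun x => if 1 / 8 ≤ x then 1 else 0) / 12800
      ≤ 37 / 64 + 3 / 51200 := by
  have hlo : ∑ i, (Y i).lo ≤ 3 / 4 :=
    (Finset.sum_le_sum fun i _ => (Y i).lo_le_mean).trans (sum_mean_le hY)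
  have hprob : ∑ i, (Y i).prob ≤ 3 := by
    simpa using Finset.sum_le_sum fun i (_ : i ∈ Finset.univ) => (Y i).prob_le_one
  have heighth := Finset.sum_le_sum fun i (_ : i ∈ Finset.univ) => (Y i).expect_ge_eighth_le
  rw [Finset.sum_add_distrib, ← Finset.mul_sum] at heighth
  rcases tailProb_le_or_sum_prob_le hY with h | h
  · linarith
  · linarith [tailProb_le hY, sum_mean_le hY]

section Averaging

variable {ι : Type*} {w : ι → ℝ} {μ B : ℝ}

theorem expect_finsetExpect [Fintype ι] (Y : TwoPointLaw) (f : ℝ → ι → ℝ) :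
    (Y.expect fun x => 𝔼 i, f x i) = 𝔼 i, Y.expect fun x => f x i := by
  simp only [expect, Finset.expect_add_distrib, Finset.mul_expect]

theorem exists_affine_majorant [Finite ι] (f : ℝ → ℝ) (hw : ∀ i, 0 ≤ w i)
    (h : ∀ Y : TwoPointLaw, Y.mean ≤ μ → Y.expect f ≤ B) :
    ∃ l : ℝ, 0 ≤ l ∧ ∀ i, f (w i) ≤ B + l * (w i - μ) := by
  have := Fintype.ofFinite ι
  have hlow : ∀ i, w i ≤ μ → f (w i) ≤ B := fun i hi => by
    simpa [expect] using h ⟨w i, w i, 0, hw i, le_rfl, le_rfl, zero_le_one⟩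
      (by simpa [mean, expect] using hi)
  by_cases hf : ∀ i, f (w i) ≤ B
  · exact ⟨0, le_rfl, fun i => by simpa using hf i⟩
  push Not at hf
  obtain ⟨k, hk⟩ := hf
  have hkμ : μ < w k := lt_of_not_ge fun hle => hk.not_ge (hlow k hle)
  obtain ⟨j, hj, hmax⟩ := Finset.exists_max_image (Finset.univ.filter fun i => μ < w i)
    (fun i => (f (w i) - B) / (w i - μ)) ⟨k, by simpa using hkμ⟩
  simp only [Finset.mem_filter, Finset.mem_univ, true_and] at hj hmax
  have hj_pos : 0 < w j - μ := sub_pos.2 hj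
  refine ⟨(f (w j) - B) / (w j - μ), (div_nonneg (sub_nonneg.2 hk.le) (sub_nonneg.2 hkμ.le)).trans
    (hmax k hkμ), fun i => ?_⟩
  rcases lt_or_ge μ (w i) with hi | hi
  · have hslope := hmax i hi
    rw [div_le_iff₀ (sub_pos.2 hi)] at hslope
    linarith
  · have hij : 0 < w j - w i := by linarith
    have hpair := h ⟨w i, w j, (μ - w i) / (w j - w i), hw i, by linarith,
      div_nonneg (by linarith) hij.le, by rw [div_le_one hij]; linarith⟩
      (le_of_eq (by simp only [mean, expect, id]; field_simp; ring))
    have hexpect : (1 - (μ - w i) / (w j - w i)) * f (w i) + (μ - w i) / (w j - w i) * f (w j)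
        = ((w j - μ) * f (w i) + (μ - w i) * f (w j)) / (w j - w i) := by field_simp; ring
    rw [expect, hexpect, div_le_iff₀ hij] at hpair
    rw [← sub_le_iff_le_add', div_mul_eq_mul_div, le_div_iff₀ hj_pos]
    linarith

variable [Fintype ι] [Nonempty ι]

theorem expect_comp_le (f : ℝ → ℝ) (hw : ∀ i, 0 ≤ w i) (hμ : 𝔼 i, w i ≤ μ)
    (h : ∀ Y : TwoPointLaw, Y.mean ≤ μ → Y.expect f ≤ B) : 𝔼 i, f (w i) ≤ B := by
  obtain ⟨l, hl₀, hl⟩ := exists_affine_majorant f hw h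
  calc 𝔼 i, f (w i) ≤ 𝔼 i, (B + l * (w i - μ)) := Finset.expect_le_expect fun i _ => hl i
    _ = B + l * (𝔼 i, w i - μ) := by
      rw [Finset.expect_add_distrib, ← Finset.mul_expect, Finset.expect_sub_distrib,
        Fintype.expect_const, Fintype.expect_const]
    _ ≤ B := by linarith [mul_nonpos_of_nonneg_of_nonpos hl₀ (sub_nonpos.2 hμ)]

theorem expect_expect_expect_le (F : ℝ → ℝ → ℝ → ℝ) (hw : ∀ i, 0 ≤ w i) (hμ : 𝔼 i, w i ≤ μ)
    (h : ∀ Y : Fin 3 → TwoPointLaw, (∀ i, (Y i).mean ≤ μ) → expect₃ Y F ≤ B) :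
    𝔼 i, 𝔼 j, 𝔼 k, F (w i) (w j) (w k) ≤ B := by
  refine expect_comp_le (fun x => 𝔼 j, 𝔼 k, F x (w j) (w k)) hw hμ fun Y₀ hY₀ => ?_
  rw [expect_finsetExpect]
  refine expect_comp_le (fun y => Y₀.expect fun x => 𝔼 k, F x y (w k)) hw hμ fun Y₁ hY₁ => ?_
  simp only [expect_finsetExpect]
  refine expect_comp_le (fun z => Y₁.expect fun y => Y₀.expect fun x => F x y z) hw hμ
    fun Y₂ hY₂ => ?_
  refine le_of_eq_of_le ?_ (h ![Y₀, Y₁, Y₂] ?_)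
  · simp [expect₃, expect]
    ring
  · simp [Fin.forall_fin_succ, hY₀, hY₁, hY₂]

end Averaging

end TwoPointLaw

section TripleDensity

variable {ι : Type*} [Fintype ι]

/-- The proportion of ordered triples of indices whose total weight is at least `1`. -/
noncomputable def tripleDensity (w : ι → ℝ) : ℝ :=
  𝔼 i, 𝔼 j, 𝔼 k, if 1 ≤ w i + w j + w k then 1 else 0

variable [Nonempty ι] {w : ι → ℝ} {η : ℝ}

theorem card_pow_three_mul_tripleDensity :
    (Fintype.card ι : ℝ) ^ 3 * tripleDensity w
      = (Finset.univ.filter fun q : ι × ι × ι => 1 ≤ w q.1 + w q.2.1 + w q.2.2).card := by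
  have hcard : (Fintype.card ι : ℝ) ≠ 0 := by exact_mod_cast Fintype.card_ne_zero
  simp only [tripleDensity, Fintype.expect_eq_sum_div_card, ← Finset.sum_div]
  rw [Finset.card_filter, Nat.cast_sum, Fintype.sum_prod_type]
  simp only [Fintype.sum_prod_type, Nat.cast_ite, Nat.cast_one, Nat.cast_zero]
  field_simp

theorem tripleDensity_le_of_expect_le (hw : ∀ i, 0 ≤ w i) (hη : 0 ≤ η)
    (hmean : 𝔼 i, w i ≤ 1 / 4 - η) : tripleDensity w ≤ 37 / 64 - 3 * η / 400 := by
  refine TwoPointLaw.expect_expect_expect_le (fun x y z => if 1 ≤ x + y + z then 1 else 0) hw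
    hmean fun Y hY => ?_
  have hlo : 0 ≤ ∑ i, (Y i).lo := Finset.sum_nonneg fun i _ => (Y i).lo_nonneg
  have hsum : ∑ i, (Y i).mean ≤ 3 * (1 / 4 - η) := by
    rw [Fin.sum_univ_three]
    linarith [hY 0, hY 1, hY 2]
  have htail := TwoPointLaw.tailProb_le fun i => (hY i).trans (by linarith)
  rw [TwoPointLaw.tailProb] at htail
  linarith

theorem tripleDensity_le_of_le_expect (hw : ∀ i, 0 ≤ w i) (hmean : 𝔼 i, w i ≤ 1 / 4)
    (heighth : 1 / 4 + η ≤ 𝔼 i, if 1 / 8 ≤ w i then (1 : ℝ) else 0) :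
    tripleDensity w ≤ 37 / 64 - 3 * η / 12800 := by
  have hbound := TwoPointLaw.expect_expect_expect_le (B := 37 / 64 + 3 / 51200) (fun x y z =>
    (if 1 ≤ x + y + z then (1 : ℝ) else 0) + 1 / 12800 * ((if 1 / 8 ≤ x then 1 else 0)
      + (if 1 / 8 ≤ y then 1 else 0) + if 1 / 8 ≤ z then 1 else 0)) hw hmean fun Y hY => by
    refine le_of_eq_of_le ?_ (TwoPointLaw.tailProb_add_sum_expect_le hY)
    rw [Fin.sum_univ_three]
    simp only [TwoPointLaw.tailProb, TwoPointLaw.expect₃, TwoPointLaw.expect]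
    ring
  simp only [Finset.expect_add_distrib, ← Finset.mul_expect, Fintype.expect_const] at hbound
  rw [tripleDensity]
  linarith

end TripleDensity

section FractionalMatching

variable {V : Type*}

/-- The 0-1 incidence vector of an edge. -/
noncomputable def incidenceVector (e : Finset V) : V → ℝ := (e : Set V).indicator 1

theorem incidenceVector_injective : Function.Injective (incidenceVector (V := V)) := fun _ _ h =>
  Finset.coe_injective (Set.indicator_one_inj ℝ h)

theorem incidenceVector_apply [DecidableEq V] (e : Finset V) (v : V) :
    incidenceVector e v = if v ∈ e then 1 else 0 := by
  simp [incidenceVector, Set.indicator_apply]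

variable {H : Finset (Finset V)} {k : ℕ}

theorem exists_weight_of_notMem_convexHull [Fintype V] [Nonempty V]
    (hH : (H : Set (Finset V)).Sized k) (hk : 0 < k)
    (hmem : (fun _ => (k / Fintype.card V : ℝ)) ∉
      convexHull ℝ (incidenceVector '' (H : Set (Finset V)))) :
    ∃ g : V → ℝ, (∀ e ∈ H, 0 ≤ ∑ v ∈ e, g v) ∧ ∑ v, g v < 0 := by
  classical
  obtain ⟨F, u, hlt, hu⟩ := geometric_hahn_banach_closed_point (convex_convexHull ℝ _)
    (Set.Finite.isClosed_convexHull ℝ (H.finite_toSet.image incidenceVector)) hmem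
  have hF : ∀ y : V → ℝ, F y = ∑ v, y v * F (Pi.single v 1) := fun y => by
    conv_lhs => rw [pi_eq_sum_univ' y]
    simp only [map_sum, map_smul, smul_eq_mul]
  have hk' : (0 : ℝ) < k := by exact_mod_cast hk
  have hV : (0 : ℝ) < Fintype.card V := by exact_mod_cast Fintype.card_pos
  refine ⟨fun v => u / k - F (Pi.single v 1), fun e he => ?_, ?_⟩
  · have hedge := hlt (incidenceVector e)
      (subset_convexHull ℝ _ (Set.mem_image_of_mem _ he))
    rw [hF] at hedge
    simp only [incidenceVector_apply, ite_mul, one_mul, zero_mul, Finset.sum_ite_mem,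
      Finset.univ_inter] at hedge
    rw [Finset.sum_sub_distrib, Finset.sum_const, hH he, nsmul_eq_mul, mul_div_cancel₀ _ hk'.ne']
    exact (sub_pos.2 hedge).le
  · rw [hF, ← Finset.mul_sum, div_mul_eq_mul_div, lt_div_iff₀ hV] at hu
    rw [Finset.sum_sub_distrib, Finset.sum_const, Finset.card_univ, nsmul_eq_mul, sub_neg,
      mul_div_assoc', div_lt_iff₀ hk']
    linarith

variable [DecidableEq V]

/-- A fractional perfect matching of the hypergraph with edge set `H`, extended by zero to all
finite sets of vertices. -/
def IsFractionalPerfectMatching (H : Finset (Finset V)) (f : Finset V → ℝ) : Prop :=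
  (∀ e, 0 ≤ f e) ∧ (∀ e, e ∉ H → f e = 0) ∧ ∀ v, ∑ e ∈ H.filter (fun e => v ∈ e), f e = 1

theorem exists_isFractionalPerfectMatching_of_mem_convexHull {a : ℝ} (ha : 0 < a)
    (hmem : (fun _ => a) ∈ convexHull ℝ (incidenceVector '' (H : Set (Finset V)))) :
    ∃ f, IsFractionalPerfectMatching H f := by
  classical
  rw [← Finset.coe_image, Finset.mem_convexHull'] at hmem
  obtain ⟨c, hc_nonneg, -, hc⟩ := hmem
  refine ⟨fun e => if e ∈ H then c (incidenceVector e) / a else 0, fun e => ?_,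
    fun e he => if_neg he, fun v => ?_⟩
  · dsimp only
    split_ifs with he
    · exact div_nonneg (hc_nonneg _ (Finset.mem_image_of_mem _ he)) ha.le
    · exact le_rfl
  · have hv : ∑ e ∈ H, c (incidenceVector e) * incidenceVector e v = a := by
      rw [← congrFun hc v, Finset.sum_image fun _ _ _ _ h => incidenceVector_injective h,
        Finset.sum_apply]
      rfl
    calc ∑ e ∈ H with v ∈ e, (if e ∈ H then c (incidenceVector e) / a else 0)
        = (∑ e ∈ H, c (incidenceVector e) * incidenceVector e v) / a := by
          rw [Finset.sum_filter, Finset.sum_div]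
          refine Finset.sum_congr rfl fun e he => ?_
          rw [incidenceVector_apply, if_pos he, mul_ite, mul_one, mul_zero, ite_div, zero_div]
      _ = 1 := by rw [hv, div_self ha.ne']

theorem exists_isFractionalPerfectMatching_or_weight [Fintype V] [Nonempty V]
    (hH : (H : Set (Finset V)).Sized k) (hk : 0 < k) :
    (∃ f, IsFractionalPerfectMatching H f) ∨
      ∃ g : V → ℝ, (∀ e ∈ H, 0 ≤ ∑ v ∈ e, g v) ∧ ∑ v, g v < 0 := by
  have hk' : (0 : ℝ) < k := by exact_mod_cast hk
  have hV : (0 : ℝ) < Fintype.card V := by exact_mod_cast Fintype.card_pos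
  exact (em _).imp (exists_isFractionalPerfectMatching_of_mem_convexHull (div_pos hk' hV))
    (exists_weight_of_notMem_convexHull hH hk)

end FractionalMatching

section OneFourPartite

variable {α β : Type*}

theorem card_filter_isLeft_disjSum (X : Finset α) (Y : Finset β) :
    ((X.disjSum Y).filter fun v => v.isLeft = true).card = X.card := by
  have hmap : (X.disjSum Y).filter (fun v => v.isLeft = true) = X.map .inl := by
    ext (z | z) <;> simp
  rw [hmap, Finset.card_map]

theorem card_filter_isRight_disjSum (X : Finset α) (Y : Finset β) :
    ((X.disjSum Y).filter fun v => v.isRight = true).card = Y.card := by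
  have hmap : (X.disjSum Y).filter (fun v => v.isRight = true) = Y.map .inr := by
    ext (z | z) <;> simp
  rw [hmap, Finset.card_map]

variable [DecidableEq α] [DecidableEq β] {H : Finset (Finset (α ⊕ β))}

/-- The vertex set of a potential edge: one vertex of the class `α` and the set `s` of vertices of
the class `β`. -/
def partiteEdge (x : α) (s : Finset β) : Finset (α ⊕ β) := insert (Sum.inl x) (s.image Sum.inr)

/-- `H` is the edge set of a `(1,4)`-partite 5-graph with vertex classes `α` and `β`. -/
def IsOneFourPartite (H : Finset (Finset (α ⊕ β))) : Prop :=
  ∀ e ∈ H, ∃ (x : α) (s : Finset β), s.card = 4 ∧ e = partiteEdge x s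

/-- The number of edges containing the vertices `x` and `v` of the two classes. -/
def codegree (H : Finset (Finset (α ⊕ β))) (x : α) (v : β) : ℕ :=
  (H.filter fun e => Sum.inl x ∈ e ∧ Sum.inr v ∈ e).card

theorem card_partiteEdge (x : α) (s : Finset β) : (partiteEdge x s).card = s.card + 1 := by
  rw [partiteEdge, Finset.card_insert_of_notMem (by simp),
    Finset.card_image_of_injective _ Sum.inr_injective]

theorem sum_partiteEdge (g : α ⊕ β → ℝ) (x : α) (s : Finset β) :
    ∑ v ∈ partiteEdge x s, g v = g (Sum.inl x) + ∑ i ∈ s, g (Sum.inr i) := by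
  rw [partiteEdge, Finset.sum_insert (by simp),
    Finset.sum_image fun _ _ _ _ h => Sum.inr_injective h]

theorem IsOneFourPartite.sized (hH : IsOneFourPartite H) :
    (H : Set (Finset (α ⊕ β))).Sized 5 := by
  intro e he
  obtain ⟨x, s, hs, rfl⟩ := hH e he
  rw [card_partiteEdge, hs]

variable [Fintype β]

theorem six_le_card_enumerations {s : Finset β} (hs : s.card = 3) :
    6 ≤ (Finset.univ.filter fun q : β × β × β => {q.1, q.2.1, q.2.2} = s).card := by
  obtain ⟨a, b, c, hab, hac, hbc, rfl⟩ := Finset.card_eq_three.1 hs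
  have hsix : ({(a, b, c), (a, c, b), (b, a, c), (b, c, a), (c, a, b), (c, b, a)} :
      Finset (β × β × β)).card = 6 := by
    simp [Finset.card_insert_of_notMem, hab, hac, hbc, hab.symm, hac.symm, hbc.symm]
  refine hsix.ge.trans (Finset.card_le_card fun q hq => ?_)
  rw [Finset.mem_filter]
  refine ⟨Finset.mem_univ _, ?_⟩
  simp only [Finset.mem_insert, Finset.mem_singleton] at hq
  ext z
  rcases hq with rfl | rfl | rfl | rfl | rfl | rfl <;>
    simp only [Finset.mem_insert, Finset.mem_singleton, or_comm, or_left_comm]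

theorem six_mul_codegree_le (hH : IsOneFourPartite H) (x : α) (v : β) :
    6 * codegree H x v
      ≤ (Finset.univ.filter fun q : β × β × β =>
          partiteEdge x {v, q.1, q.2.1, q.2.2} ∈ H).card := by
  refine Finset.mul_card_image_le_card_of_maps_to
    (f := fun q : β × β × β => partiteEdge x {v, q.1, q.2.1, q.2.2}) (fun q hq => ?_) 6
    fun e he => ?_
  · simpa [partiteEdge] using hq
  obtain ⟨heH, hxe, hve⟩ := Finset.mem_filter.1 he
  obtain ⟨y, s, hs, rfl⟩ := hH e heH
  obtain rfl : x = y := by simpa [partiteEdge] using hxe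
  have hvs : v ∈ s := by simpa [partiteEdge] using hve
  have herase : (s.erase v).card = 3 := by rw [Finset.card_erase_of_mem hvs, hs]
  refine (six_le_card_enumerations herase).trans
    (Finset.card_le_card fun q hq => ?_)
  have hq_eq : insert v {q.1, q.2.1, q.2.2} = s := by
    rw [(Finset.mem_filter.1 hq).2, Finset.insert_erase hvs]
  simpa only [Finset.mem_filter, Finset.mem_univ, true_and, hq_eq, and_true] using heH

variable [Fintype α]

/-- `H` has no independent set containing at least `N / 4 - ε N` vertices of the class `α` and at
least `3 N / 4 - ε N` vertices of the class `β`, where `N` is the size of `β`. -/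
def HasNoLargeIndependentSet (H : Finset (Finset (α ⊕ β))) (ε : ℝ) : Prop :=
  ∀ S : Finset (α ⊕ β), (∀ e ∈ H, ¬ e ⊆ S) →
    ¬ ((Fintype.card β : ℝ) / 4 - ε * Fintype.card β
        ≤ ((S.filter fun v => v.isLeft = true).card : ℝ) ∧
      3 * (Fintype.card β : ℝ) / 4 - ε * Fintype.card β
        ≤ ((S.filter fun v => v.isRight = true).card : ℝ))

/-- An obstruction to a fractional perfect matching: weights on the two classes that are
nonnegative on every edge and have negative total, normalised to have minima `-1` and `0`. -/
structure IsDualObstruction (H : Finset (Finset (α ⊕ β))) (h : α → ℝ) (w : β → ℝ) : Prop where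
  neg_one_le : ∀ y, -1 ≤ h y
  exists_eq_neg_one : ∃ x, h x = -1
  nonneg : ∀ i, 0 ≤ w i
  exists_eq_zero : ∃ v, w v = 0
  edge_nonneg : ∀ y s, partiteEdge y s ∈ H → 0 ≤ h y + ∑ i ∈ s, w i
  sum_neg : ∑ y, h y + ∑ i, w i < 0

variable {h : α → ℝ} {w : β → ℝ}

theorem exists_shifted_weight [Nonempty β] (hH : IsOneFourPartite H)
    (hcard : Fintype.card β = 4 * Fintype.card α) {g : α ⊕ β → ℝ}
    (hedge : ∀ e ∈ H, 0 ≤ ∑ v ∈ e, g v) (hsum : ∑ v, g v < 0) :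
    ∃ (h : α → ℝ) (w : β → ℝ), (∀ i, 0 ≤ w i) ∧ (∃ v, w v = 0) ∧
      (∀ y s, partiteEdge y s ∈ H → 0 ≤ h y + ∑ i ∈ s, w i) ∧ ∑ y, h y + ∑ i, w i < 0 := by
  obtain ⟨v, hv⟩ := Finite.exists_min fun i : β => g (Sum.inr i)
  have hcard' : (Fintype.card β : ℝ) = 4 * Fintype.card α := by exact_mod_cast hcard
  refine ⟨fun y => g (Sum.inl y) + 4 * g (Sum.inr v), fun i => g (Sum.inr i) - g (Sum.inr v),
    fun i => sub_nonneg.2 (hv i), ⟨v, sub_self _⟩, fun y s he => ?_, ?_⟩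
  · have hs : s.card = 4 := by
      have hfive := hH.sized he
      rw [card_partiteEdge] at hfive
      lia
    have hsum_edge := hedge _ he
    rw [sum_partiteEdge] at hsum_edge
    rw [Finset.sum_sub_distrib, Finset.sum_const, hs, nsmul_eq_mul]
    push_cast
    linarith
  · rw [Fintype.sum_sum_type] at hsum
    simp only [Finset.sum_add_distrib, Finset.sum_sub_distrib, Finset.sum_const, Finset.card_univ,
      nsmul_eq_mul, hcard']
    linarith

theorem exists_isDualObstruction [Nonempty α] [Nonempty β] (hH : IsOneFourPartite H)
    (hcard : Fintype.card β = 4 * Fintype.card α) {g : α ⊕ β → ℝ}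
    (hedge : ∀ e ∈ H, 0 ≤ ∑ v ∈ e, g v) (hsum : ∑ v, g v < 0) :
    ∃ h w, IsDualObstruction H h w := by
  obtain ⟨h, w, hw, ⟨v, hv⟩, hedge', hsum'⟩ := exists_shifted_weight hH hcard hedge hsum
  obtain ⟨x, hx⟩ := Finite.exists_min h
  have hx_neg : h x < 0 := by
    by_contra! hx_nonneg
    linarith [Finset.sum_nonneg fun y (_ : y ∈ Finset.univ) => hx_nonneg.trans (hx y),
      Finset.sum_nonneg fun i (_ : i ∈ Finset.univ) => hw i]
  have hx_pos : 0 < -h x := neg_pos.2 hx_neg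
  exact ⟨fun y => h y / -h x, fun i => w i / -h x,
    { neg_one_le y := by rw [le_div_iff₀ hx_pos]; linarith [hx y]
      exists_eq_neg_one := ⟨x, by rw [div_neg, div_self hx_neg.ne]⟩
      nonneg i := div_nonneg (hw i) hx_pos.le
      exists_eq_zero := ⟨v, by rw [hv, zero_div]⟩
      edge_nonneg y s he := by
        rw [← Finset.sum_div, ← add_div]
        exact div_nonneg (hedge' y s he) hx_pos.le
      sum_neg := by
        rw [← Finset.sum_div, ← Finset.sum_div, ← add_div]
        exact div_neg_of_neg_of_pos hsum' hx_pos }⟩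

namespace IsDualObstruction

theorem one_le_of_partiteEdge_mem (hd : IsDualObstruction H h w) {x : α} (hx : h x = -1) {v : β}
    (hv : w v = 0) {i j k : β} (he : partiteEdge x {v, i, j, k} ∈ H) : 1 ≤ w i + w j + w k := by
  have hinsert (a : β) (s : Finset β) : ∑ i ∈ insert a s, w i ≤ w a + ∑ i ∈ s, w i := by
    by_cases ha : a ∈ s
    · rw [Finset.insert_eq_of_mem ha]
      exact le_add_of_nonneg_left (hd.nonneg a)
    · exact (Finset.sum_insert ha).le
  linarith [hd.edge_nonneg _ _ he, hinsert v {i, j, k}, hinsert i {j, k}, hinsert j {k},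
    Finset.sum_singleton w k]

theorem exists_six_mul_codegree_le [Nonempty β] (hH : IsOneFourPartite H)
    (hd : IsDualObstruction H h w) :
    ∃ x v, 6 * (codegree H x v : ℝ) ≤ (Fintype.card β : ℝ) ^ 3 * tripleDensity w := by
  obtain ⟨x, hx⟩ := hd.exists_eq_neg_one
  obtain ⟨v, hv⟩ := hd.exists_eq_zero
  refine ⟨x, v, ?_⟩
  rw [card_pow_three_mul_tripleDensity]
  exact_mod_cast (six_mul_codegree_le hH x v).trans (Finset.card_le_card
    (Finset.monotone_filter_right _ fun _ _ he => hd.one_le_of_partiteEdge_mem hx hv he))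

theorem not_subset_disjSum (hH : IsOneFourPartite H) (hd : IsDualObstruction H h w)
    {e : Finset (α ⊕ β)} (he : e ∈ H) :
    ¬ e ⊆ (Finset.univ.filter fun y => h y < -(1 / 2)).disjSum
      (Finset.univ.filter fun i => w i ≤ 1 / 8) := by
  intro hsub
  obtain ⟨y, s, hs, rfl⟩ := hH e he
  have hy : h y < -(1 / 2) := by
    simpa using hsub (Finset.mem_insert_self _ _)
  have hw : ∑ i ∈ s, w i ≤ s.card • (1 / 8 : ℝ) := Finset.sum_le_card_nsmul _ _ _ fun i hi => by
    simpa using hsub (Finset.mem_insert_of_mem (Finset.mem_image_of_mem _ hi))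
  rw [hs, nsmul_eq_mul] at hw
  push_cast at hw
  linarith [hd.edge_nonneg y s he]

theorem expect_le [Nonempty β] (hd : IsDualObstruction H h w)
    (hcard : Fintype.card β = 4 * Fintype.card α) :
    𝔼 i, w i ≤ 1 / 8
      + (Finset.univ.filter fun y => h y < -(1 / 2)).card / (2 * Fintype.card β : ℝ) := by
  have hcard' : (Fintype.card β : ℝ) = 4 * Fintype.card α := by exact_mod_cast hcard
  have hβ : (0 : ℝ) < Fintype.card β := by exact_mod_cast Fintype.card_pos
  have hh : ∑ y, (-(1 / 2) - if h y < -(1 / 2) then (1 / 2 : ℝ) else 0) ≤ ∑ y, h y :=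
    Finset.sum_le_sum fun y _ => by split_ifs <;> linarith [hd.neg_one_le y]
  rw [Finset.sum_sub_distrib, ← Finset.sum_filter, Finset.sum_const, Finset.sum_const,
    Finset.card_univ, nsmul_eq_mul, nsmul_eq_mul] at hh
  rw [Fintype.expect_eq_sum_div_card, ← div_div, div_le_iff₀ hβ, add_mul,
    div_mul_cancel₀ _ hβ.ne']
  linarith [hd.sum_neg]

theorem expect_le_quarter [Nonempty β] (hd : IsDualObstruction H h w)
    (hcard : Fintype.card β = 4 * Fintype.card α) : 𝔼 i, w i ≤ 1 / 4 := by
  have hβ : (0 : ℝ) < Fintype.card β := by exact_mod_cast Fintype.card_pos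
  have hcard' : (Fintype.card β : ℝ) = 4 * Fintype.card α := by exact_mod_cast hcard
  have hX : ((Finset.univ.filter fun y => h y < -(1 / 2)).card : ℝ) ≤ Fintype.card α := by
    exact_mod_cast Finset.card_le_univ _
  refine (hd.expect_le hcard).trans ?_
  rw [← le_sub_iff_add_le', div_le_iff₀ (mul_pos two_pos hβ)]
  linarith

theorem tripleDensity_le [Nonempty β] (hH : IsOneFourPartite H) (hd : IsDualObstruction H h w)
    (hcard : Fintype.card β = 4 * Fintype.card α) {ε : ℝ} (hε : 0 < ε)
    (hS : HasNoLargeIndependentSet H ε) : tripleDensity w ≤ 37 / 64 - 3 * ε / 12800 := by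
  have hβ : (0 : ℝ) < Fintype.card β := by exact_mod_cast Fintype.card_pos
  have hlarge := hS _ fun e => hd.not_subset_disjSum hH
  rw [card_filter_isLeft_disjSum, card_filter_isRight_disjSum, not_and_or, not_le, not_le] at hlarge
  rcases hlarge with hX | hY
  · have hmean : 𝔼 i, w i ≤ 1 / 4 - ε / 2 := by
      refine (hd.expect_le hcard).trans ?_
      rw [← le_sub_iff_add_le', div_le_iff₀ (mul_pos two_pos hβ)]
      linarith
    linarith [tripleDensity_le_of_expect_le hd.nonneg (half_pos hε).le hmean]
  · refine tripleDensity_le_of_le_expect hd.nonneg (hd.expect_le_quarter hcard) ?_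
    have heighth : ∑ i, (1 - if w i ≤ 1 / 8 then (1 : ℝ) else 0)
        ≤ ∑ i, if 1 / 8 ≤ w i then (1 : ℝ) else 0 :=
      Finset.sum_le_sum fun i _ => by split_ifs <;> linarith
    rw [Finset.sum_sub_distrib, Finset.sum_const, Finset.card_univ, Finset.sum_boole,
      nsmul_eq_mul] at heighth
    rw [Fintype.expect_eq_sum_div_card, le_div_iff₀ hβ]
    linarith

end IsDualObstruction

theorem pow_three_sub_le_choose_sub_choose {n : ℕ} (hn : 0 < n) :
    37 / 64 * (n : ℝ) ^ 3 - 9 * (n : ℝ) ^ 2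
      ≤ 6 * (((n - 1).choose 3 : ℝ) - ((3 * n / 4).choose 3 : ℝ)) := by
  have hn' : (1 : ℝ) ≤ n := by exact_mod_cast hn
  have hlower : ((n : ℝ) - 3) ^ 3 ≤ 6 * ((n - 1).choose 3 : ℝ) := by
    have hpow := Nat.pow_le_choose (α := ℝ) 3 (n - 1)
    rw [div_le_iff₀ (by positivity), show n - 1 + 1 - 3 = n - 3 by lia] at hpow
    have hsub : ((n : ℝ) - 3) ^ 3 ≤ ((n - 3 : ℕ) : ℝ) ^ 3 := by
      rw [Odd.pow_le_pow (by decide)]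
      rw [sub_le_iff_le_add]
      exact_mod_cast le_tsub_add
    norm_num [Nat.factorial] at hpow
    linarith
  have hupper : 6 * ((3 * n / 4).choose 3 : ℝ) ≤ (3 * n / 4 : ℝ) ^ 3 := by
    have hpow := Nat.choose_le_pow_div (α := ℝ) 3 (3 * n / 4)
    rw [le_div_iff₀ (by positivity)] at hpow
    have hdiv : ((3 * n / 4 : ℕ) : ℝ) ≤ 3 * n / 4 := by
      simpa using Nat.cast_div_le (m := 3 * n) (n := 4) (α := ℝ)
    have hcube := pow_le_pow_left₀ (Nat.cast_nonneg _) hdiv 3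
    norm_num [Nat.factorial] at hpow
    linarith
  nlinarith

theorem fractional_perfect_matching_general {ε : ℝ} (hε : 0 < ε)
    (hcard : Fintype.card β = 4 * Fintype.card α) (hlarge : 10 ^ 6 / ε ≤ Fintype.card β)
    (hH : IsOneFourPartite H)
    (hdeg : ∀ x v, ((Fintype.card β - 1).choose 3 : ℝ) - ((3 * Fintype.card β / 4).choose 3 : ℝ)
      - 3 * (ε / 10 ^ 6) * (Fintype.card β : ℝ) ^ 3 ≤ codegree H x v)
    (hS : HasNoLargeIndependentSet H ε) : ∃ f, IsFractionalPerfectMatching H f := by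
  have hβ : 0 < Fintype.card β := by
    exact_mod_cast (show (0 : ℝ) < 10 ^ 6 / ε by positivity).trans_le hlarge
  have : Nonempty β := Fintype.card_pos_iff.1 hβ
  have : Nonempty α := Fintype.card_pos_iff.1 (by lia)
  refine (exists_isFractionalPerfectMatching_or_weight hH.sized (by norm_num)).resolve_right ?_
  rintro ⟨g, hedge, hsum⟩
  obtain ⟨h, w, hd⟩ := exists_isDualObstruction hH hcard hedge hsum
  obtain ⟨x, v, hlower⟩ := hd.exists_six_mul_codegree_le hH
  have hupper := hd.tripleDensity_le hH hcard hε hS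
  have hchoose := pow_three_sub_le_choose_sub_choose hβ
  have hdeg' := hdeg x v
  rw [div_le_iff₀ hε] at hlarge
  set N := (Fintype.card β : ℝ)
  have hN : 0 < N := by positivity
  have hslack : 10 ^ 6 * N ^ 2 ≤ ε * N ^ 3 := by
    nlinarith [mul_le_mul_of_nonneg_right hlarge (sq_nonneg N)]
  have hdensity := mul_le_mul_of_nonneg_left hupper (pow_nonneg hN.le 3)
  nlinarith [pow_pos hN 2]

end OneFourPartite

/-- For every `ε > 0` there exist `ρ > 0` (small in terms of `ε`) and
`n₀ = n₀(ε)` such that for every `n ≥ n₀` with `n ≡ 0 (mod 4)`: if `H` is a balanced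
`(1,4)`-partite 5-graph with classes `X = Fin (n/4)`, `[n]` satisfying
`d_H({x,v}) ≥ C(n-1,3) - C(3n/4,3) - 3ρn³` for all `x ∈ X`, `v ∈ [n]`, and `H` has
no independent set `S` with `|S ∩ X| ≥ n/4 - εn` and `|S ∩ [n]| ≥ 3n/4 - εn`, then
`H` has a fractional perfect matching. -/
theorem fractional_perfect_matching (ε : ℝ) (hε : 0 < ε) :
    ∃ ρ : ℝ, 0 < ρ ∧ ρ < ε ∧ ∃ n₀ : ℕ, ∀ n : ℕ, n₀ ≤ n → 4 ∣ n →
    ∀ H : Finset (Finset (Fin (n / 4) ⊕ Fin n)),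
      (∀ e ∈ H, ∃ (x : Fin (n / 4)) (s : Finset (Fin n)),
        s.card = 4 ∧ e = insert (Sum.inl x) (s.image Sum.inr)) →
      (∀ (x : Fin (n / 4)) (v : Fin n),
        (Nat.choose (n - 1) 3 : ℝ) - (Nat.choose (3 * n / 4) 3 : ℝ) - 3 * ρ * (n : ℝ) ^ 3
          ≤ ((H.filter (fun e => Sum.inl x ∈ e ∧ Sum.inr v ∈ e)).card : ℝ)) →
      (∀ S : Finset (Fin (n / 4) ⊕ Fin n),
        (∀ e ∈ H, ¬ e ⊆ S) →
        ¬ ((n : ℝ) / 4 - ε * n ≤ ((S.filter (fun v => v.isLeft = true)).card : ℝ) ∧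
            3 * (n : ℝ) / 4 - ε * n ≤ ((S.filter (fun v => v.isRight = true)).card : ℝ))) →
      ∃ f : Finset (Fin (n / 4) ⊕ Fin n) → ℝ,
        (∀ e, 0 ≤ f e) ∧ (∀ e, e ∉ H → f e = 0) ∧
        (∀ v : Fin (n / 4) ⊕ Fin n, ∑ e ∈ H.filter (fun e => v ∈ e), f e = 1) := by
  exact ⟨ε / 10 ^ 6, by positivity, div_lt_self hε (by norm_num), ⌈10 ^ 6 / ε⌉₊,
    fun n hn hdvd H hH hdeg hS => fractional_perfect_matching_general hε
      (by simp only [Fintype.card_fin, Nat.mul_div_cancel' hdvd])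
      (by simpa only [Fintype.card_fin] using Nat.ceil_le.1 hn) hH
      (by simpa only [codegree, Fintype.card_fin] using hdeg)
      (by simpa only [HasNoLargeIndependentSet, Fintype.card_fin] using hS)⟩
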